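/- arXiv:2011.05033 — 3 statements merged into one kernel-verified Lean document; each statement's English description precedes it below -/
import Mathlib

section
/- If (x,z) ∈ ℝ^n × ℝ^n is feasible for the convex relaxation (C), then the pair (X, x), where X = x x^T + C and C is the diagonal matrix with diagonal entries C_{jj} = z_j − x_j², is feasible for the Shor relaxation (S), and its objective value D•X + 2 c^T x equals the objective value of (C) at (x,z), namely Σ_{j∈N} D_{jj} z_j + 2 Σ_{j∈N} c_j x_j. Consequently v* ≤ p*. -/
/-!
Subtracting `x xᵀ` from the lifted matrix `X = x xᵀ + Diag(z - x²)` leaves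
`Diag(z - x²)`, which is positive semidefinite exactly when `x_j² ≤ z_j` for all `j`. As `X` has
diagonal `z`, its trace inner product with a diagonal matrix `Y` is `∑ j, Y j j * z j`
(`traceIP_lift`), so the linear constraints and the objective of (S) at `(X, x)` are those of (C)
at `(x, z)`. Hence every value attained in (C) is attained in (S), and the infima compare.
-/

/- Common definitions for diagonal QCQPs, the Shor relaxation, and the
convex relaxations, following "Exactness conditions for the Shor relaxation
of diagonal QCQPs". Optimal values are infima in the extended reals. -/

namespace DiagQCQP2011

open Matrix Finset

noncomputable section

/-- Trace inner product `Y • X` of two square matrices. -/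
def traceIP {n : ℕ} (Y X : Matrix (Fin n) (Fin n) ℝ) : ℝ :=
  ∑ j, ∑ k, Y j k * X j k

/-- Objective of the QCQP (P): `xᵀ D x + 2 cᵀ x`. -/
def qObj {n : ℕ} (D : Matrix (Fin n) (Fin n) ℝ) (c : Fin n → ℝ) (x : Fin n → ℝ) : ℝ :=
  (∑ j, ∑ k, x j * D j k * x k) + 2 * ∑ j, c j * x j

/-- Feasibility for the QCQP (P): `xᵀ Aⁱ x + 2 aᵢᵀ x ≤ bᵢ` for all `i`. -/
def qFeas {n m : ℕ} (A : Fin m → Matrix (Fin n) (Fin n) ℝ) (a : Fin m → Fin n → ℝ)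
    (b : Fin m → ℝ) (x : Fin n → ℝ) : Prop :=
  ∀ i, (∑ j, ∑ k, x j * A i j k * x k) + 2 * ∑ j, a i j * x j ≤ b i

/-- Optimal value `c*` of the QCQP (P), as an infimum in the extended reals. -/
def qVal {n m : ℕ} (D : Matrix (Fin n) (Fin n) ℝ) (A : Fin m → Matrix (Fin n) (Fin n) ℝ)
    (c : Fin n → ℝ) (a : Fin m → Fin n → ℝ) (b : Fin m → ℝ) : EReal :=
  sInf {v : EReal | ∃ x : Fin n → ℝ, qFeas A a b x ∧ v = ((qObj D c x : ℝ) : EReal)}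

/-- Objective of the Shor relaxation (S): `D • X + 2 cᵀ x`. -/
def shorObj {n : ℕ} (D : Matrix (Fin n) (Fin n) ℝ) (c : Fin n → ℝ)
    (X : Matrix (Fin n) (Fin n) ℝ) (x : Fin n → ℝ) : ℝ :=
  traceIP D X + 2 * ∑ j, c j * x j

/-- Feasibility for the Shor relaxation (S). -/
def shorFeas {n m : ℕ} (A : Fin m → Matrix (Fin n) (Fin n) ℝ) (a : Fin m → Fin n → ℝ)
    (b : Fin m → ℝ) (X : Matrix (Fin n) (Fin n) ℝ) (x : Fin n → ℝ) : Prop :=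
  X.IsSymm ∧ (∀ i, traceIP (A i) X + 2 * ∑ j, a i j * x j ≤ b i) ∧
    (X - vecMulVec x x).PosSemidef

/-- Optimal value `v*` of the Shor relaxation (S). -/
def shorVal {n m : ℕ} (D : Matrix (Fin n) (Fin n) ℝ) (A : Fin m → Matrix (Fin n) (Fin n) ℝ)
    (c : Fin n → ℝ) (a : Fin m → Fin n → ℝ) (b : Fin m → ℝ) : EReal :=
  sInf {v : EReal | ∃ (X : Matrix (Fin n) (Fin n) ℝ) (x : Fin n → ℝ),
    shorFeas A a b X x ∧ v = ((shorObj D c X x : ℝ) : EReal)}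

/-- Strict feasibility (interior point) for the Shor relaxation (S). -/
def shorStrictFeas {n m : ℕ} (A : Fin m → Matrix (Fin n) (Fin n) ℝ) (a : Fin m → Fin n → ℝ)
    (b : Fin m → ℝ) (X : Matrix (Fin n) (Fin n) ℝ) (x : Fin n → ℝ) : Prop :=
  X.IsSymm ∧ (∀ i, traceIP (A i) X + 2 * ∑ j, a i j * x j < b i) ∧
    (X - vecMulVec x x).PosDef

/-- Assumption 1: (P) is feasible, some nonnegative combination of the `Aⁱ` is
positive definite, and (S) has a strictly feasible (interior) point. -/
def Assumption1 {n m : ℕ} (A : Fin m → Matrix (Fin n) (Fin n) ℝ) (a : Fin m → Fin n → ℝ)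
    (b : Fin m → ℝ) : Prop :=
  (∃ x : Fin n → ℝ, qFeas A a b x) ∧
  (∃ y : Fin m → ℝ, (∀ i, 0 ≤ y i) ∧ (∑ i, y i • A i).PosDef) ∧
  (∃ (X : Matrix (Fin n) (Fin n) ℝ) (x : Fin n → ℝ), shorStrictFeas A a b X x)

/-- Objective of the convex relaxation (C). -/
def convObj {n : ℕ} (D : Matrix (Fin n) (Fin n) ℝ) (c : Fin n → ℝ)
    (x z : Fin n → ℝ) : ℝ :=
  (∑ j, D j j * z j) + 2 * ∑ j, c j * x j

/-- Feasibility for the convex relaxation (C). -/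
def convFeas {n m : ℕ} (A : Fin m → Matrix (Fin n) (Fin n) ℝ) (a : Fin m → Fin n → ℝ)
    (b : Fin m → ℝ) (x z : Fin n → ℝ) : Prop :=
  (∀ i, (∑ j, A i j j * z j) + 2 * ∑ j, a i j * x j ≤ b i) ∧ ∀ j, x j ^ 2 ≤ z j

/-- Optimal value `p*` of the convex relaxation (C). -/
def convVal {n m : ℕ} (D : Matrix (Fin n) (Fin n) ℝ) (A : Fin m → Matrix (Fin n) (Fin n) ℝ)
    (c : Fin n → ℝ) (a : Fin m → Fin n → ℝ) (b : Fin m → ℝ) : EReal :=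
  sInf {v : EReal | ∃ x z : Fin n → ℝ,
    convFeas A a b x z ∧ v = ((convObj D c x z : ℝ) : EReal)}

/-- KKT point of the convex relaxation (C). -/
def KKT {n m : ℕ} (D : Matrix (Fin n) (Fin n) ℝ) (A : Fin m → Matrix (Fin n) (Fin n) ℝ)
    (c : Fin n → ℝ) (a : Fin m → Fin n → ℝ) (b : Fin m → ℝ)
    (x z : Fin n → ℝ) (μ : Fin m → ℝ) (ν : Fin n → ℝ) : Prop :=
  (∀ i, 0 ≤ μ i) ∧ (∀ j, 0 ≤ ν j) ∧
  (∀ j, D j j + (∑ i, μ i * A i j j) - ν j = 0) ∧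
  (∀ j, c j + (∑ i, μ i * a i j) + ν j * x j = 0) ∧
  convFeas A a b x z ∧
  (∀ i, μ i * (b i - (∑ j, A i j j * z j) - 2 * ∑ j, a i j * x j) = 0) ∧
  (∀ j, ν j * (z j - x j ^ 2) = 0)

/-- The polyhedral set `S_k` of multipliers, whose emptiness (for all `k`)
is the exactness condition of Burer–Ye. -/
def Sk {n m : ℕ} (D : Matrix (Fin n) (Fin n) ℝ) (A : Fin m → Matrix (Fin n) (Fin n) ℝ)
    (c : Fin n → ℝ) (a : Fin m → Fin n → ℝ) (k : Fin n) : Set (Fin m → ℝ) :=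
  {μ | (∀ i, 0 ≤ μ i) ∧
       D k k + (∑ i, μ i * A i k k) = 0 ∧
       c k + (∑ i, μ i * a i k) = 0 ∧
       ∀ j, j ≠ k → 0 ≤ D j j + (∑ i, μ i * A i j j)}

/-- Partition hypothesis: `{N_h}` partitions `N`, within each class all
constraint matrices have a common diagonal value `ξ^{ih}`, and in each class the
minimal diagonal entry of `D` is attained at the unique index `j_h`. -/
def PartitionHyp {n m : ℕ} {H : Type*} (D : Matrix (Fin n) (Fin n) ℝ)
    (A : Fin m → Matrix (Fin n) (Fin n) ℝ) (Nh : H → Finset (Fin n))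
    (ξ : Fin m → H → ℝ) (jh : H → Fin n) : Prop :=
  (∀ j : Fin n, ∃! h : H, j ∈ Nh h) ∧
  (∀ i h, ∀ j ∈ Nh h, A i j j = ξ i h) ∧
  (∀ h, jh h ∈ Nh h) ∧
  (∀ h, ∀ j ∈ Nh h, j ≠ jh h → D (jh h) (jh h) < D j j)

/-- Objective of the second convex relaxation (C'). -/
def conv2Obj {n : ℕ} {H : Type*} [Fintype H] (D : Matrix (Fin n) (Fin n) ℝ)
    (c : Fin n → ℝ) (Nh : H → Finset (Fin n)) (jh : H → Fin n)
    (x : Fin n → ℝ) (w : H → ℝ) : ℝ :=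
  (∑ h, D (jh h) (jh h) * w h) +
    (∑ h, ∑ j ∈ Nh h, (D j j - D (jh h) (jh h)) * x j ^ 2) + 2 * ∑ j, c j * x j

/-- Feasibility for the second convex relaxation (C'). -/
def conv2Feas {n m : ℕ} {H : Type*} [Fintype H] (ξ : Fin m → H → ℝ)
    (a : Fin m → Fin n → ℝ) (b : Fin m → ℝ) (Nh : H → Finset (Fin n))
    (x : Fin n → ℝ) (w : H → ℝ) : Prop :=
  (∀ i, (∑ h, ξ i h * w h) + 2 * ∑ j, a i j * x j ≤ b i) ∧
  ∀ h, (∑ j ∈ Nh h, x j ^ 2) ≤ w h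

/-- Optimal value `q*` of the second convex relaxation (C'). -/
def conv2Val {n m : ℕ} {H : Type*} [Fintype H] (D : Matrix (Fin n) (Fin n) ℝ)
    (ξ : Fin m → H → ℝ) (c : Fin n → ℝ) (a : Fin m → Fin n → ℝ) (b : Fin m → ℝ)
    (Nh : H → Finset (Fin n)) (jh : H → Fin n) : EReal :=
  sInf {v : EReal | ∃ (x : Fin n → ℝ) (w : H → ℝ),
    conv2Feas ξ a b Nh x w ∧ v = ((conv2Obj D c Nh jh x w : ℝ) : EReal)}

/-- KKT point of the second convex relaxation (C'). -/
def KKT2 {n m : ℕ} {H : Type*} [Fintype H] (D : Matrix (Fin n) (Fin n) ℝ)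
    (ξ : Fin m → H → ℝ) (c : Fin n → ℝ) (a : Fin m → Fin n → ℝ) (b : Fin m → ℝ)
    (Nh : H → Finset (Fin n)) (jh : H → Fin n)
    (x : Fin n → ℝ) (w : H → ℝ) (μ : Fin m → ℝ) (γ : H → ℝ) : Prop :=
  (∀ i, 0 ≤ μ i) ∧ (∀ h, 0 ≤ γ h) ∧
  (∀ h, D (jh h) (jh h) + (∑ i, μ i * ξ i h) - γ h = 0) ∧
  (∀ h, ∀ j ∈ Nh h,
    (D j j - D (jh h) (jh h)) * x j + c j + (∑ i, μ i * a i j) + γ h * x j = 0) ∧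
  conv2Feas ξ a b Nh x w ∧
  (∀ i, μ i * (b i - (∑ h, ξ i h * w h) - 2 * ∑ j, a i j * x j) = 0) ∧
  (∀ h, γ h * (w h - ∑ j ∈ Nh h, x j ^ 2) = 0)

/-- Objective of the second convex relaxation (C') in the case `|H| = 1`
(with `j_1 = 0` scaled out; `d* = D 0 0`). -/
def conv1Obj {n : ℕ} [NeZero n] (D : Matrix (Fin n) (Fin n) ℝ) (c : Fin n → ℝ)
    (x : Fin n → ℝ) (w : ℝ) : ℝ :=
  D 0 0 * w + (∑ j, (D j j - D 0 0) * x j ^ 2) + 2 * ∑ j, c j * x j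

/-- Feasibility for the second convex relaxation (C') in the case `|H| = 1`. -/
def conv1Feas {n m : ℕ} (ξ : Fin m → ℝ) (a : Fin m → Fin n → ℝ) (b : Fin m → ℝ)
    (x : Fin n → ℝ) (w : ℝ) : Prop :=
  (∀ i, ξ i * w + 2 * ∑ j, a i j * x j ≤ b i) ∧ (∑ j, x j ^ 2) ≤ w

/-- Optimal value `q*` of the second convex relaxation (C') in the case `|H| = 1`. -/
def conv1Val {n m : ℕ} [NeZero n] (D : Matrix (Fin n) (Fin n) ℝ) (ξ : Fin m → ℝ)
    (c : Fin n → ℝ) (a : Fin m → Fin n → ℝ) (b : Fin m → ℝ) : EReal :=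
  sInf {v : EReal | ∃ (x : Fin n → ℝ) (w : ℝ),
    conv1Feas ξ a b x w ∧ v = ((conv1Obj D c x w : ℝ) : EReal)}

/-- The function `x_j(μ)` from the paper (meaningful for `j ≠ 0`, `|H| = 1`). -/
def xmu {n m : ℕ} [NeZero n] (D : Matrix (Fin n) (Fin n) ℝ) (c : Fin n → ℝ)
    (a : Fin m → Fin n → ℝ) (μ : Fin m → ℝ) (j : Fin n) : ℝ :=
  -(c j + ∑ i, μ i * a i j) / (D j j - D 0 0)

end


/-- The lifted matrix `x xᵀ + Diag(z - x²)`. -/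
def lift {n : ℕ} (x z : Fin n → ℝ) : Matrix (Fin n) (Fin n) ℝ :=
  Matrix.of fun j k => x j * x k + (if j = k then z j - x j ^ 2 else 0)

/-- A diagonal matrix only sees the diagonal of the lifted matrix, which is `z`. -/
lemma traceIP_lift {n : ℕ} {Y : Matrix (Fin n) (Fin n) ℝ} (hY : Y.IsDiag)
    (x z : Fin n → ℝ) : traceIP Y (lift x z) = ∑ j, Y j j * z j := by
  unfold traceIP
  refine Finset.sum_congr rfl fun j _ => ?_
  rw [Finset.sum_eq_single j (fun k _ hk => by rw [hY hk.symm, zero_mul]) (by simp)]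
  simp only [lift, Matrix.of_apply, if_true]
  ring

lemma lift_sub_vecMulVec {n : ℕ} (x z : Fin n → ℝ) :
    lift x z - vecMulVec x x = Matrix.diagonal fun j => z j - x j ^ 2 := by
  ext j k
  simp [lift, vecMulVec_apply, Matrix.diagonal_apply]

lemma shorFeas_lift {n m : ℕ} {A : Fin m → Matrix (Fin n) (Fin n) ℝ}
    (hA : ∀ i, (A i).IsDiag) {a : Fin m → Fin n → ℝ} {b : Fin m → ℝ} {x z : Fin n → ℝ}
    (h : convFeas A a b x z) : shorFeas A a b (lift x z) x := by
  refine ⟨?_, fun i => ?_, ?_⟩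
  · ext j k
    by_cases hjk : j = k
    · simp [lift, hjk]
    · simp [lift, hjk, Ne.symm hjk, mul_comm]
  · rw [traceIP_lift (hA i)]
    exact h.1 i
  · rw [lift_sub_vecMulVec]
    exact Matrix.PosSemidef.diagonal fun j => sub_nonneg.mpr (h.2 j)

lemma shorObj_lift {n : ℕ} {D : Matrix (Fin n) (Fin n) ℝ} (hD : D.IsDiag)
    (c x z : Fin n → ℝ) : shorObj D c (lift x z) x = convObj D c x z := by
  rw [shorObj, convObj, traceIP_lift hD]

/-- from a feasible point `(x, z)` of the convex relaxation (C), the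
pair `(X, x)` with `X = x xᵀ + Diag(z - x²)` is feasible for the Shor relaxation
(S) with the same objective value; consequently `v* ≤ p*`. -/
theorem statement1 {n m : ℕ} (hn : 0 < n) (hm : 0 < m)
    (D : Matrix (Fin n) (Fin n) ℝ) (hD : D.IsDiag)
    (A : Fin m → Matrix (Fin n) (Fin n) ℝ) (hA : ∀ i, (A i).IsDiag)
    (c : Fin n → ℝ) (a : Fin m → Fin n → ℝ) (b : Fin m → ℝ)
    (x z : Fin n → ℝ) (hfeas : convFeas A a b x z)
    (X : Matrix (Fin n) (Fin n) ℝ)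
    (hX : X = Matrix.of fun j k => x j * x k + (if j = k then z j - x j ^ 2 else 0)) :
    shorFeas A a b X x ∧ shorObj D c X x = convObj D c x z ∧
      shorVal D A c a b ≤ convVal D A c a b := by
  obtain rfl : X = lift x z := hX
  refine ⟨shorFeas_lift hA hfeas, shorObj_lift hD c x z, ?_⟩
  -- The lift sends every value attained in (C) to the same value attained in (S).
  apply sInf_le_sInf
  rintro v ⟨x', z', h, rfl⟩
  exact ⟨lift x' z', x', shorFeas_lift hA h, by rw [shorObj_lift hD]⟩

end DiagQCQP2011
end

section
/- Under Assumption 1 and the partition hypothesis, if the polyhedral set S_k is empty for every k ∈ N_H = { j_h : h ∈ H }, then the convex relaxation (C) and the Shor relaxation (S) are exact, i.e., p* = v* = c*. -/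
/-! Exactness of the convex and Shor relaxations.

Always `p* ≤ v* ≤ c*`: the diagonal of a Shor-feasible `X` is feasible for (C), and `x xᵀ` is
feasible for (S) when `x` is feasible for (P). It remains to turn an optimal solution of (C) into
a feasible point of (P) with the same objective.

A positive definite combination of the `Aⁱ` makes the feasible region of (C) compact
(`convFeas_bounded`), so (C) has an optimal solution `(x, z)` (`exists_conv_min`). The interior
point of (S) is a Slater point of (C), so Lagrange multipliers `μ ≥ 0` exist (`exists_multiplier`,
by separating an open convex set from a point), and `(x, z)` minimises the Lagrangian
`Σ ν_j z_j + 2 Σ r_j x_j` over `x_j² ≤ z_j`, where `ν_j = D_jj + Σ μ_i Aⁱ_jj` and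
`r_j = c_j + Σ μ_i a_ij`. Increasing `z_j` shows `ν_j ≥ 0`; if `ν_j = 0`, moving `x_j` freely shows
`r_j = 0`; if `ν_j > 0`, then `z_j = x_j²` since `z_j` cannot be decreased
(`lagrangian_min`). So `ν_{j_h} = 0` would put `μ` in `S_{j_h} = ∅`; hence `ν_{j_h} > 0`, and within
the class `N_h` all other `ν_j` are larger still, because only `D_jj` varies there. Thus `z_j = x_j²`
for every `j` and `x` solves (P). -/

/- Common definitions for diagonal QCQPs, the Shor relaxation, and the
convex relaxations, following "Exactness conditions for the Shor relaxation
of diagonal QCQPs". Optimal values are infima in the extended reals. -/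

namespace DiagQCQP2011

open Matrix Finset

/-- Strong Lagrangian duality under a Slater condition, with the abstract constraint `x ∈ K` kept
in the domain: a lower bound `p` on the constrained problem is a lower bound on some Lagrangian. -/
lemma exists_multiplier {E : Type*} [AddCommGroup E] [Module ℝ E] {m : ℕ} {K : Set E}
    {f : E → ℝ} {g : Fin m → E → ℝ} (hf : ConvexOn ℝ K f) (hg : ∀ i, ConvexOn ℝ K (g i))
    {x₀ : E} (hx₀ : x₀ ∈ K) (hs : ∀ i, g i x₀ < 0) {p : ℝ}
    (hp : ∀ x ∈ K, (∀ i, g i x ≤ 0) → p ≤ f x) :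
    ∃ μ : Fin m → ℝ, (∀ i, 0 ≤ μ i) ∧ ∀ x ∈ K, p ≤ f x + ∑ i, μ i * g i x := by
  classical
  set V : Set ((Fin m → ℝ) × ℝ) := {q | ∃ x ∈ K, (∀ i, g i x < q.1 i) ∧ f x < q.2} with hV
  have hVc : Convex ℝ V := by
    rintro ⟨u, s⟩ ⟨x, hx, hxg, hxf⟩ ⟨v, t⟩ ⟨y, hy, hyg, hyf⟩ α β hα hβ hαβ
    -- one of the two weights is positive, which keeps the inequalities strict
    have key : ∀ {r₁ r₂ q₁ q₂ : ℝ}, r₁ < q₁ → r₂ < q₂ → α * r₁ + β * r₂ < α * q₁ + β * q₂ := by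
      intro r₁ r₂ q₁ q₂ h₁ h₂
      rcases hα.eq_or_lt with h | h
      · have : β = 1 := by linarith
        subst this; simp [← h, h₂]
      · have := mul_lt_mul_of_pos_left h₁ h
        have := mul_le_mul_of_nonneg_left h₂.le hβ
        linarith
    refine ⟨α • x + β • y, hf.1 hx hy hα hβ hαβ, fun i => ?_, ?_⟩
    · exact ((hg i).2 hx hy hα hβ hαβ).trans_lt (key (hxg i) (hyg i))
    · exact (hf.2 hx hy hα hβ hαβ).trans_lt (key hxf hyf)
  have hVo : IsOpen V := by
    have : V = ⋃ x ∈ K, ((⋂ i, {q : (Fin m → ℝ) × ℝ | g i x < q.1 i}) ∩ {q | f x < q.2}) := by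
      ext q
      simp only [hV, Set.mem_ofPred_eq, Set.mem_iUnion, Set.mem_inter_iff, Set.mem_iInter,
        exists_prop]
    rw [this]
    refine isOpen_biUnion fun x _ => IsOpen.inter (isOpen_iInter_of_finite fun i => ?_) ?_
    · exact isOpen_lt (by fun_prop) (by fun_prop)
    · exact isOpen_lt (by fun_prop) (by fun_prop)
  have hpV : ((0 : Fin m → ℝ), p) ∉ V := by
    rintro ⟨x, hx, h1, h2⟩
    exact absurd (hp x hx fun i => (h1 i).le) (not_le.2 h2)
  obtain ⟨φ, hφ⟩ := geometric_hahn_banach_open_point hVc hVo hpV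
  set l : Fin m → ℝ := fun i => -φ (Pi.single i 1, 0) with hl
  set l₀ : ℝ := -φ (0, 1) with hl₀
  have hφe : ∀ u t, φ (u, t) = -(∑ i, u i * l i) - t * l₀ := by
    intro u t
    have h1 : ((u, t) : (Fin m → ℝ) × ℝ) =
        (∑ i, u i • ((Pi.single i 1 : Fin m → ℝ), (0 : ℝ))) + t • (0, 1) := by
      ext j
      · simp [Prod.fst_sum, Finset.sum_apply, Pi.single_apply]
      · simp [Prod.snd_sum]
    rw [h1, map_add, map_sum]
    simp only [map_smul, smul_eq_mul, hl, hl₀, mul_neg, Finset.sum_neg_distrib]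
    ring
  have hsep : ∀ u t, (u, t) ∈ V → l₀ * p < (∑ i, u i * l i) + t * l₀ := by
    intro u t h
    have := hφ _ h
    rw [hφe, hφe] at this
    simp at this
    linarith
  -- a slope of a strictly bounded below affine function on `[0, ∞)` is nonnegative
  have hslope : ∀ B C r : ℝ, (∀ s, 0 ≤ s → B < C + s * r) → 0 ≤ r := by
    intro B C r h
    by_contra! hr
    have h0 := h 0 le_rfl
    have h1 := h ((C - B) / (-r)) (div_nonneg (by linarith) (by linarith))
    have : (C - B) / (-r) * r = B - C := by
      have := hr.ne
      field_simp
      ring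
    linarith
  have hlnn : ∀ i, 0 ≤ l i := by
    intro i
    apply hslope (l₀ * p) ((∑ k, (g k x₀ + 1) * l k) + (f x₀ + 1) * l₀)
    intro s hs0
    have := hsep (fun k => g k x₀ + 1 + s * Pi.single (M := fun _ => ℝ) i 1 k) (f x₀ + 1)
      ⟨x₀, hx₀, fun k => by
        have : 0 ≤ s * Pi.single (M := fun _ => ℝ) i 1 k := by
          apply mul_nonneg hs0
          by_cases h : k = i
          · subst h; simp
          · simp [h]
        show g k x₀ < g k x₀ + 1 + _
        linarith, by simp⟩
    have e : ∑ k, (g k x₀ + 1 + s * Pi.single (M := fun _ => ℝ) i 1 k) * l k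
        = (∑ k, (g k x₀ + 1) * l k) + s * l i := by
      simp_rw [add_mul _ (s * _), Finset.sum_add_distrib]
      simp [Pi.single_apply]
    rw [e] at this
    linarith
  have hl₀nn : 0 ≤ l₀ := by
    apply hslope (l₀ * p) ((∑ k, (g k x₀ + 1) * l k) + (f x₀ + 1) * l₀)
    intro s hs0
    have := hsep (fun k => g k x₀ + 1) (f x₀ + 1 + s)
      ⟨x₀, hx₀, fun k => by simp, by show f x₀ < f x₀ + 1 + s; linarith⟩
    linarith
  have hle : ∀ x ∈ K, l₀ * p ≤ (∑ i, g i x * l i) + f x * l₀ := by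
    intro x hx
    have hS : 0 ≤ (∑ i, l i) + l₀ := add_nonneg (Finset.sum_nonneg fun i _ => hlnn i) hl₀nn
    by_contra! hlt
    set δ := l₀ * p - ((∑ i, g i x * l i) + f x * l₀) with hδ
    have hδ0 : 0 < δ := by linarith
    have hε : 0 < δ / ((∑ i, l i) + l₀ + 1) := by positivity
    have := hsep (fun k => g k x + δ / ((∑ i, l i) + l₀ + 1)) (f x + δ / ((∑ i, l i) + l₀ + 1))
      ⟨x, hx, fun k => by simp [hε], by simp [hε]⟩
    simp_rw [add_mul, Finset.sum_add_distrib, ← Finset.mul_sum] at this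
    have h2 : δ / ((∑ i, l i) + l₀ + 1) * ((∑ i, l i) + l₀ + 1) = δ := by
      field_simp
    nlinarith
  have hl₀pos : 0 < l₀ := by
    refine lt_of_le_of_ne hl₀nn fun h0 => ?_
    have h1 := hle x₀ hx₀
    rw [← h0] at h1
    simp only [zero_mul, mul_zero, add_zero] at h1
    have h2 : ∀ i ∈ Finset.univ, g i x₀ * l i ≤ 0 := fun i _ =>
      mul_nonpos_of_nonpos_of_nonneg (hs i).le (hlnn i)
    have h3 := (Finset.sum_eq_zero_iff_of_nonpos h2).1 (le_antisymm (Finset.sum_nonpos h2) h1)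
    have h4 : ∀ i, l i = 0 := fun i => by
      simpa [(hs i).ne] using h3 i (Finset.mem_univ i)
    have := hsep (fun k => g k x₀ + 1) (f x₀ + 1) ⟨x₀, hx₀, fun k => by simp, by simp⟩
    simp [h4, ← h0] at this
  refine ⟨fun i => l i / l₀, fun i => div_nonneg (hlnn i) hl₀nn, fun x hx => ?_⟩
  have h1 := hle x hx
  have h2 : ∑ i, l i / l₀ * g i x = (∑ i, g i x * l i) / l₀ := by
    rw [Finset.sum_div]
    exact Finset.sum_congr rfl fun i _ => by ring
  rw [h2, ← sub_nonneg]
  have : f x + (∑ i, g i x * l i) / l₀ - p = ((∑ i, g i x * l i) + f x * l₀ - l₀ * p) / l₀ := by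
    field_simp; ring
  rw [this]
  exact div_nonneg (by linarith) hl₀nn

/-- Optimality conditions for the separable Lagrangian `Σ ν_j z_j + 2 Σ r_j x_j` over the region
`x_j² ≤ z_j`. -/
lemma lagrangian_min {n : ℕ} {ν r x z : Fin n → ℝ} (hxz : ∀ j, x j ^ 2 ≤ z j)
    (hmin : ∀ x' z' : Fin n → ℝ, (∀ j, x' j ^ 2 ≤ z' j) →
      (∑ j, ν j * z j) + 2 * ∑ j, r j * x j ≤ (∑ j, ν j * z' j) + 2 * ∑ j, r j * x' j) (k : Fin n) :
    0 ≤ ν k ∧ (ν k = 0 → r k = 0) ∧ (0 < ν k → z k = x k ^ 2) := by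
  classical
  -- only the `k`-th coordinates are perturbed
  have hk : ∀ y w : ℝ, y ^ 2 ≤ w → ν k * z k + 2 * (r k * x k) ≤ ν k * w + 2 * (r k * y) := by
    intro y w hyw
    have h := hmin (Function.update x k y) (Function.update z k w) (fun j => by
      by_cases h : j = k
      · subst h; simpa using hyw
      · simpa [h] using hxz j)
    have hu : ∀ (q v : Fin n → ℝ) (t : ℝ),
        ∑ j, q j * Function.update v k t j = (∑ j, q j * v j) - q k * v k + q k * t := by
      intro q v t
      rw [← Finset.add_sum_erase _ _ (Finset.mem_univ k),
        ← Finset.add_sum_erase _ (fun j => q j * v j) (Finset.mem_univ k)]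
      have : ∑ j ∈ Finset.univ.erase k, q j * Function.update v k t j
          = ∑ j ∈ Finset.univ.erase k, q j * v j :=
        Finset.sum_congr rfl fun j hj => by simp [Finset.ne_of_mem_erase hj]
      rw [this]; simp; ring
    rw [hu, hu] at h
    linarith
  refine ⟨?_, fun h0 => ?_, fun hpos => ?_⟩
  · have := hk (x k) (z k + 1) (by linarith [hxz k])
    linarith
  · have := hk (x k - r k) _ le_rfl
    rw [h0] at this
    nlinarith [sq_nonneg (r k)]
  · have := hk (x k) _ le_rfl
    exact le_antisymm (le_of_mul_le_mul_left (by linarith) hpos) (hxz k)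

lemma traceIP_diag {n : ℕ} {Y : Matrix (Fin n) (Fin n) ℝ} (hY : Y.IsDiag)
    (X : Matrix (Fin n) (Fin n) ℝ) : traceIP Y X = ∑ j, Y j j * X j j := by
  unfold traceIP
  refine Finset.sum_congr rfl fun j _ => ?_
  exact Finset.sum_eq_single j (fun k _ hk => by simp [hY hk.symm]) (by simp)

lemma quad_diag {n : ℕ} {Y : Matrix (Fin n) (Fin n) ℝ} (hY : Y.IsDiag) (x : Fin n → ℝ) :
    ∑ j, ∑ k, x j * Y j k * x k = ∑ j, Y j j * x j ^ 2 := by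
  refine Finset.sum_congr rfl fun j _ => ?_
  rw [Finset.sum_eq_single j (fun k _ hk => by simp [hY hk.symm]) (by simp)]
  ring

/-- Aggregating the linear constraints of (C) with multipliers `y`. -/
lemma aggregate {n m : ℕ} (y : Fin m → ℝ) (A : Fin m → Matrix (Fin n) (Fin n) ℝ)
    (a : Fin m → Fin n → ℝ) (x z : Fin n → ℝ) :
    ∑ i, y i * ((∑ j, A i j j * z j) + 2 * ∑ j, a i j * x j)
      = (∑ j, (∑ i, y i * A i j j) * z j) + 2 * ∑ j, (∑ i, y i * a i j) * x j := by
  simp_rw [mul_add, Finset.sum_add_distrib, Finset.sum_mul, Finset.mul_sum]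
  congr 1
  · rw [Finset.sum_comm]
    exact Finset.sum_congr rfl fun _ _ => Finset.sum_congr rfl fun _ _ => by ring
  · rw [Finset.sum_comm]
    exact Finset.sum_congr rfl fun _ _ => Finset.sum_congr rfl fun _ _ => by ring

/-- If some nonnegative combination of the `Aⁱ` has positive diagonal, the `z`-part of the feasible
region of (C) is bounded: complete squares in the aggregated constraint, giving up half of
`α_j z_j` to dominate the linear term. -/
lemma convFeas_bounded {n m : ℕ} {A : Fin m → Matrix (Fin n) (Fin n) ℝ}
    {a : Fin m → Fin n → ℝ} {b : Fin m → ℝ} {y : Fin m → ℝ} (hy : ∀ i, 0 ≤ y i)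
    (hpos : ∀ j, 0 < ∑ i, y i * A i j j) :
    ∃ Z : Fin n → ℝ, ∀ x z, convFeas A a b x z → ∀ j, z j ≤ Z j := by
  set α : Fin n → ℝ := fun j => ∑ i, y i * A i j j
  set β : Fin n → ℝ := fun j => ∑ i, y i * a i j
  have hα : ∀ j, 0 < α j := hpos
  refine ⟨fun j => 2 * ((∑ i, y i * b i) + ∑ k, 2 * β k ^ 2 / α k) / α j, fun x z h j => ?_⟩
  have h1 : (∑ k, (α k * z k + 2 * (β k * x k))) ≤ ∑ i, y i * b i := by
    rw [Finset.sum_add_distrib, ← Finset.mul_sum, ← aggregate]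
    exact Finset.sum_le_sum fun i _ => mul_le_mul_of_nonneg_left (h.1 i) (hy i)
  have hlow : ∀ k, α k * z k / 2 ≤ α k * z k + 2 * (β k * x k) + 2 * β k ^ 2 / α k := by
    intro k
    have e : 0 ≤ (α k * x k + 2 * β k) ^ 2 / (2 * α k) :=
      div_nonneg (sq_nonneg _) (by linarith [hα k])
    have e2 : (α k * x k + 2 * β k) ^ 2 / (2 * α k)
        = α k * x k ^ 2 / 2 + 2 * (β k * x k) + 2 * β k ^ 2 / α k := by
      have := (hα k).ne'
      field_simp; ring
    have := mul_le_mul_of_nonneg_left (h.2 k) (hα k).le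
    linarith
  have h2 : α j * z j / 2 ≤ ∑ k, (α k * z k + 2 * (β k * x k) + 2 * β k ^ 2 / α k) := by
    refine (hlow j).trans (Finset.single_le_sum
      (f := fun k => α k * z k + 2 * (β k * x k) + 2 * β k ^ 2 / α k) (fun k _ => ?_)
      (Finset.mem_univ j))
    exact (div_nonneg (mul_nonneg (hα k).le ((sq_nonneg _).trans (h.2 k))) zero_le_two).trans
      (hlow k)
  rw [Finset.sum_add_distrib] at h2
  show z j ≤ _ / α j
  rw [le_div_iff₀ (hα j)]
  linarith

lemma exists_conv_min {n m : ℕ} (D : Matrix (Fin n) (Fin n) ℝ)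
    {A : Fin m → Matrix (Fin n) (Fin n) ℝ} (c : Fin n → ℝ)
    {a : Fin m → Fin n → ℝ} {b : Fin m → ℝ} {y : Fin m → ℝ} (hy : ∀ i, 0 ≤ y i)
    (hpos : ∀ j, 0 < ∑ i, y i * A i j j) {x₀ z₀ : Fin n → ℝ} (h₀ : convFeas A a b x₀ z₀) :
    ∃ x z, convFeas A a b x z ∧
      ∀ x' z', convFeas A a b x' z' → convObj D c x z ≤ convObj D c x' z' := by
  obtain ⟨Z, hZ⟩ := convFeas_bounded (a := a) (b := b) hy hpos
  set F : Set ((Fin n → ℝ) × (Fin n → ℝ)) := {q | convFeas A a b q.1 q.2} with hF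
  have hcl : IsClosed F := by
    have : F = (⋂ i, {q : (Fin n → ℝ) × (Fin n → ℝ) |
        (∑ j, A i j j * q.2 j) + 2 * ∑ j, a i j * q.1 j ≤ b i}) ∩
        ⋂ j, {q | q.1 j ^ 2 ≤ q.2 j} := by
      ext q; simp [hF, convFeas]
    rw [this]
    refine IsClosed.inter (isClosed_iInter fun i => ?_) (isClosed_iInter fun j => ?_)
    · exact isClosed_le (by fun_prop) (by fun_prop)
    · exact isClosed_le (by fun_prop) (by fun_prop)
  have hsub : F ⊆ Set.Icc (fun j => -(1 + Z j)) (fun j => 1 + Z j) ×ˢ Set.Icc 0 Z := by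
    rintro ⟨x, z⟩ h
    have hz := hZ x z h
    have hx := h.2
    simp only at hx
    refine ⟨⟨fun j => ?_, fun j => ?_⟩, fun j => (sq_nonneg _).trans (hx j), hz⟩
    · show -(1 + Z j) ≤ x j
      nlinarith [hx j, hz j, sq_nonneg (x j + 1), sq_nonneg (x j)]
    · show x j ≤ 1 + Z j
      nlinarith [hx j, hz j, sq_nonneg (x j - 1), sq_nonneg (x j)]
  have hcomp : IsCompact F := (isCompact_Icc.prod isCompact_Icc).of_isClosed_subset hcl hsub
  have hcont : ContinuousOn (fun q : (Fin n → ℝ) × (Fin n → ℝ) => convObj D c q.1 q.2) F := by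
    unfold convObj
    fun_prop
  obtain ⟨⟨x, z⟩, hxz, hm⟩ := hcomp.exists_isMinOn ⟨(x₀, z₀), h₀⟩ hcont
  exact ⟨x, z, hxz, fun x' z' h' => hm (a := (x', z')) h'⟩

/-- Lagrange multipliers for (C) from a Slater point, the constraints `x_j² ≤ z_j` being kept. -/
lemma exists_conv_multiplier {n m : ℕ} {D : Matrix (Fin n) (Fin n) ℝ}
    {A : Fin m → Matrix (Fin n) (Fin n) ℝ} {c : Fin n → ℝ}
    {a : Fin m → Fin n → ℝ} {b : Fin m → ℝ} {x₀ z₀ : Fin n → ℝ} (h₀ : ∀ j, x₀ j ^ 2 ≤ z₀ j)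
    (hs : ∀ i, (∑ j, A i j j * z₀ j) + 2 * ∑ j, a i j * x₀ j < b i) {p : ℝ}
    (hp : ∀ x z, convFeas A a b x z → p ≤ convObj D c x z) :
    ∃ μ : Fin m → ℝ, (∀ i, 0 ≤ μ i) ∧ ∀ x z : Fin n → ℝ, (∀ j, x j ^ 2 ≤ z j) →
      p ≤ convObj D c x z + ∑ i, μ i * ((∑ j, A i j j * z j) + 2 * (∑ j, a i j * x j) - b i) := by
  set K : Set ((Fin n → ℝ) × (Fin n → ℝ)) := {q | ∀ j, q.1 j ^ 2 ≤ q.2 j} with hK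
  have hKc : Convex ℝ K := by
    rintro ⟨x, z⟩ hx ⟨x', z'⟩ hx' α β hα hβ hαβ j
    have h1 := mul_le_mul_of_nonneg_left (hx j) hα
    have h2 := mul_le_mul_of_nonneg_left (hx' j) hβ
    show (α * x j + β * x' j) ^ 2 ≤ α * z j + β * z' j
    simp only at h1 h2
    have hβ' : β = 1 - α := by linarith
    subst hβ'
    nlinarith [mul_nonneg (mul_nonneg hα hβ) (sq_nonneg (x j - x' j))]
  -- affine functions of `(x, z)` satisfy the convexity inequality with equality
  have haff : ∀ (u v : Fin n → ℝ) (t : ℝ), ConvexOn ℝ K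
      (fun q => (∑ j, u j * q.2 j) + 2 * (∑ j, v j * q.1 j) - t) := by
    intro u v t
    refine ⟨hKc, fun q _ q' _ α β hα hβ hαβ => le_of_eq ?_⟩
    have e : ∀ w y y' : Fin n → ℝ, ∑ j, w j * (α • y + β • y') j
        = α * ∑ j, w j * y j + β * ∑ j, w j * y' j := by
      intro w y y'
      rw [Finset.mul_sum, Finset.mul_sum, ← Finset.sum_add_distrib]
      exact Finset.sum_congr rfl fun j _ => by simp; ring
    simp only [Prod.snd_add, Prod.fst_add, Prod.smul_fst, Prod.smul_snd, e, smul_eq_mul]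
    have hβ' : β = 1 - α := by linarith
    subst hβ'
    ring
  obtain ⟨μ, hμ, h⟩ := exists_multiplier (K := K)
    (f := fun q => convObj D c q.1 q.2)
    (g := fun i q => (∑ j, A i j j * q.2 j) + 2 * (∑ j, a i j * q.1 j) - b i)
    (by simpa [convObj] using haff (fun j => D j j) c 0) (fun i => haff _ _ _)
    (x₀ := (x₀, z₀)) h₀ (fun i => by have := hs i; simp only; linarith) (p := p)
    (fun q hq hg => hp q.1 q.2 ⟨fun i => by have := hg i; linarith, hq⟩)
  exact ⟨μ, hμ, fun x z hxz => h (x, z) hxz⟩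

lemma convFeas_of_shorFeas {n m : ℕ} {A : Fin m → Matrix (Fin n) (Fin n) ℝ}
    (hA : ∀ i, (A i).IsDiag) {a : Fin m → Fin n → ℝ} {b : Fin m → ℝ}
    {X : Matrix (Fin n) (Fin n) ℝ} {x : Fin n → ℝ} (h : shorFeas A a b X x) :
    convFeas A a b x (fun j => X j j) := by
  refine ⟨fun i => ?_, fun j => ?_⟩
  · simpa only [traceIP_diag (hA i)] using h.2.1 i
  · have := h.2.2.diag_nonneg (i := j)
    simp only [Matrix.sub_apply, vecMulVec_apply] at this
    linarith [sq (x j)]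

lemma shorFeas_of_qFeas {n m : ℕ} {A : Fin m → Matrix (Fin n) (Fin n) ℝ}
    (hA : ∀ i, (A i).IsDiag) {a : Fin m → Fin n → ℝ} {b : Fin m → ℝ}
    {x : Fin n → ℝ} (h : qFeas A a b x) : shorFeas A a b (vecMulVec x x) x := by
  refine ⟨?_, fun i => ?_, ?_⟩
  · ext j k; simp [vecMulVec_apply, mul_comm]
  · have := h i
    rw [quad_diag (hA i)] at this
    simpa [traceIP_diag (hA i), vecMulVec_apply, sq] using this
  · rw [sub_self]; exact Matrix.PosSemidef.zero

/-- under Assumption 1 and the partition hypothesis, if `S_k = ∅`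
for every `k ∈ N_H = {j_h : h ∈ H}`, then the convex relaxation (C) and the Shor
relaxation (S) are exact: `p* = v* = c*`. -/
theorem statement8 {n m : ℕ} {H : Type*} [Fintype H] (hn : 0 < n) (hm : 0 < m)
    (D : Matrix (Fin n) (Fin n) ℝ) (hD : D.IsDiag)
    (A : Fin m → Matrix (Fin n) (Fin n) ℝ) (hA : ∀ i, (A i).IsDiag)
    (c : Fin n → ℝ) (a : Fin m → Fin n → ℝ) (b : Fin m → ℝ)
    (Nh : H → Finset (Fin n)) (ξ : Fin m → H → ℝ) (jh : H → Fin n)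
    (hpart : PartitionHyp D A Nh ξ jh)
    (hass : Assumption1 A a b)
    (hempty : ∀ h : H, Sk D A c a (jh h) = ∅) :
    convVal D A c a b = shorVal D A c a b ∧
      shorVal D A c a b = qVal D A c a b := by
  obtain ⟨hpar, hξ, hmem, hlt⟩ := hpart
  obtain ⟨⟨xP, hxP⟩, ⟨y, hy, hyA⟩, X₀, x₀, -, hst, hpd⟩ := hass
  have hCS : convVal D A c a b ≤ shorVal D A c a b := by
    refine le_sInf ?_
    rintro v ⟨X, x, hX, rfl⟩
    refine sInf_le ⟨x, fun j => X j j, convFeas_of_shorFeas hA hX, ?_⟩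
    rw [shorObj, traceIP_diag hD, convObj]
  have hSP : shorVal D A c a b ≤ qVal D A c a b := by
    refine le_sInf ?_
    rintro v ⟨x, hx, rfl⟩
    refine sInf_le ⟨vecMulVec x x, x, shorFeas_of_qFeas hA hx, ?_⟩
    simp only [shorObj, traceIP_diag hD, qObj, quad_diag hD, vecMulVec_apply, sq]
  have hPC : qVal D A c a b ≤ convVal D A c a b := by
    have hpos : ∀ j, 0 < ∑ i, y i * A i j j := fun j => by
      simpa [Matrix.sum_apply] using hyA.diag_pos (i := j)
    obtain ⟨x, z, hxz, hmin⟩ := exists_conv_min D c hy hpos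
      (convFeas_of_shorFeas hA (shorFeas_of_qFeas hA hxP))
    -- the interior point of (S) gives a Slater point of (C)
    obtain ⟨μ, hμ, hL⟩ := exists_conv_multiplier (x₀ := x₀) (z₀ := fun j => X₀ j j)
      (fun j => by
        have := hpd.posSemidef.diag_nonneg (i := j)
        simp only [Matrix.sub_apply, vecMulVec_apply] at this
        linarith [sq (x₀ j)])
      (fun i => by simpa only [traceIP_diag (hA i)] using hst i) hmin
    set ν : Fin n → ℝ := fun j => D j j + ∑ i, μ i * A i j j with hν
    set r : Fin n → ℝ := fun j => c j + ∑ i, μ i * a i j with hr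
    have hLag : ∀ x' z' : Fin n → ℝ,
        convObj D c x' z' +
          ∑ i, μ i * ((∑ j, A i j j * z' j) + 2 * (∑ j, a i j * x' j) - b i)
        = (∑ j, ν j * z' j) + 2 * (∑ j, r j * x' j) - ∑ i, μ i * b i := by
      intro x' z'
      simp_rw [mul_sub, Finset.sum_sub_distrib, aggregate, convObj, hν, hr, add_mul,
        Finset.sum_add_distrib]
      ring
    have hle : ∑ i, μ i * ((∑ j, A i j j * z j) + 2 * (∑ j, a i j * x j) - b i) ≤ 0 :=
      Finset.sum_nonpos fun i _ =>
        mul_nonpos_of_nonneg_of_nonpos (hμ i) (by linarith [hxz.1 i])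
    have hopt := lagrangian_min (ν := ν) (r := r) hxz.2 (fun x' z' h' => by
      have h1 := hL x' z' h'
      rw [hLag] at h1
      have h2 := hLag x z
      linarith)
    have hjh : ∀ h, 0 < ν (jh h) := by
      intro h
      refine lt_of_le_of_ne (hopt _).1 fun h0 => ?_
      have : μ ∈ Sk D A c a (jh h) :=
        ⟨hμ, h0.symm, (hopt _).2.1 h0.symm, fun j _ => (hopt j).1⟩
      rw [hempty] at this
      exact this
    have hνpos : ∀ j, 0 < ν j := by
      intro j
      obtain ⟨h, hj, -⟩ := hpar j
      by_cases e : j = jh h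
      · rw [e]; exact hjh h
      · have h1 := hjh h
        have h2 := hlt h j hj e
        simp only [hν, hξ _ h _ (hmem h)] at h1
        simp only [hν, hξ _ h _ hj]
        linarith
    have hz : ∀ j, z j = x j ^ 2 := fun j => (hopt j).2.2 (hνpos j)
    refine le_sInf ?_
    rintro v ⟨x', z', h', rfl⟩
    have hfe : qFeas A a b x := fun i => by
      rw [quad_diag (hA i)]
      simpa only [hz] using hxz.1 i
    refine (show qVal D A c a b ≤ _ from sInf_le ⟨x, hfe, rfl⟩).trans (EReal.coe_le_coe_iff.2 ?_)
    have e : qObj D c x = convObj D c x z := by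
      rw [qObj, quad_diag hD, convObj]
      simp only [hz]
    exact e.trans_le (hmin x' z' h')
  exact ⟨le_antisymm hCS (hSP.trans hPC), le_antisymm hSP (hPC.trans hCS)⟩

end DiagQCQP2011
end

section
/- Under Assumption 1 and the partition hypothesis, if for each h ∈ H the variable x_{j_h} is sign-definite in the strict sense that c_{j_h} ≠ 0 and c_{j_h} · a_{i j_h} ≥ 0 for all i ∈ M, then the convex relaxation (C) and the Shor relaxation (S) are exact, i.e., p* = v* = c*. -/
/-!
For diagonal data, `X ↦ diag X` and `x ↦ x xᵀ` give `p* ≤ v* ≤ c*`. It remains to see that every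
feasible point `(x, z)` of (C) is dominated by a feasible point `y` of (P) (`exists_qFeas_le`).

Within a block `N_h` the constraints only see `∑ z_j`, while the objective is cheapest at `j_h`;
hence all the slack `z_j - x_j²` of the block may be moved onto the index `j_h`
(`sum_concentrate_le`). Afterwards `x_{j_h}` is replaced by `-sign(c_{j_h}) √(z_{j_h})`. Because
`|x_{j_h}| ≤ √(z_{j_h})` and all linear coefficients of this variable have the weak sign of
`c_{j_h}`, this decreases every linear term (`mul_neg_sign_sqrt_le`) and closes the gap
`z_j = y_j²` for all `j`. The comparison is made point by point, so it needs neither attainment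
nor duality.
-/


/- Common definitions for diagonal QCQPs, the Shor relaxation, and the
convex relaxations, following "Exactness conditions for the Shor relaxation
of diagonal QCQPs". Optimal values are infima in the extended reals. -/

namespace DiagQCQP2011

open Matrix Finset

/-- Double sums of a quadratic form with a diagonal matrix collapse to the diagonal. -/
theorem diag_quad {n : ℕ} {B : Matrix (Fin n) (Fin n) ℝ} (hB : B.IsDiag) (x : Fin n → ℝ) :
    ∑ j, ∑ k, x j * B j k * x k = ∑ j, B j j * x j ^ 2 := by
  refine Finset.sum_congr rfl fun j _ => ?_
  rw [Finset.sum_eq_single j]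
  · ring
  · intro k _ hk
    rw [hB (Ne.symm hk)]
    ring
  · simp

theorem diag_traceIP {n : ℕ} {B : Matrix (Fin n) (Fin n) ℝ} (hB : B.IsDiag)
    (X : Matrix (Fin n) (Fin n) ℝ) : traceIP B X = ∑ j, B j j * X j j := by
  refine Finset.sum_congr rfl fun j _ => ?_
  rw [Finset.sum_eq_single j]
  · intro k _ hk
    rw [hB (Ne.symm hk), zero_mul]
  · simp

/-- The diagonal of a feasible `X` gives a point of (C) with the same objective value. -/
theorem convVal_le_shorVal {n m : ℕ} {D : Matrix (Fin n) (Fin n) ℝ} (hD : D.IsDiag)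
    {A : Fin m → Matrix (Fin n) (Fin n) ℝ} (hA : ∀ i, (A i).IsDiag)
    (c : Fin n → ℝ) (a : Fin m → Fin n → ℝ) (b : Fin m → ℝ) :
    convVal D A c a b ≤ shorVal D A c a b := by
  refine le_sInf ?_
  rintro v ⟨X, x, ⟨-, hX, hpsd⟩, rfl⟩
  refine sInf_le ⟨x, fun j => X j j, ⟨fun i => ?_, fun j => ?_⟩, ?_⟩
  · rw [← diag_traceIP (hA i)]
    exact hX i
  · have h : 0 ≤ (X - vecMulVec x x) j j := hpsd.diag_nonneg
    rw [Matrix.sub_apply, vecMulVec_apply] at h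
    nlinarith
  · rw [shorObj, convObj, diag_traceIP hD]

/-- A feasible `x` of (P) gives the rank-one feasible point `X = x xᵀ` of (S). -/
theorem shorVal_le_qVal {n m : ℕ} (D : Matrix (Fin n) (Fin n) ℝ)
    (A : Fin m → Matrix (Fin n) (Fin n) ℝ)
    (c : Fin n → ℝ) (a : Fin m → Fin n → ℝ) (b : Fin m → ℝ) :
    shorVal D A c a b ≤ qVal D A c a b := by
  have key : ∀ (B : Matrix (Fin n) (Fin n) ℝ) (x : Fin n → ℝ),
      traceIP B (vecMulVec x x) = ∑ j, ∑ k, x j * B j k * x k := fun B x =>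
    Finset.sum_congr rfl fun j _ => Finset.sum_congr rfl fun k _ => by
      rw [vecMulVec_apply]
      ring
  refine le_sInf ?_
  rintro v ⟨x, hx, rfl⟩
  refine sInf_le ⟨vecMulVec x x, x, ⟨?_, fun i => ?_, ?_⟩, ?_⟩
  · ext j k
    simp [vecMulVec_apply, mul_comm]
  · rw [key]
    exact hx i
  · rw [sub_self]
    exact Matrix.PosSemidef.zero
  · rw [shorObj, qObj, key]

/-- If every block has a representative `jh h` minimising `d`, moving the total slack
`z k - x k ^ 2` of each block onto its representative does not increase `∑ d j * z j`. -/
theorem sum_concentrate_le {n : ℕ} {H : Type*} [Fintype H] {Nh : H → Finset (Fin n)}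
    {jh : H → Fin n} (hN : ∀ j : Fin n, ∃! h : H, j ∈ Nh h) (hj : ∀ h, jh h ∈ Nh h)
    {x y z : Fin n → ℝ} (hxz : ∀ j, x j ^ 2 ≤ z j)
    (hy : ∀ h, y (jh h) ^ 2 = x (jh h) ^ 2 + ∑ k ∈ Nh h, (z k - x k ^ 2))
    (hy' : ∀ h, ∀ j ∈ Nh h, j ≠ jh h → y j = x j)
    {d : Fin n → ℝ} (hd : ∀ h, ∀ j ∈ Nh h, d (jh h) ≤ d j) :
    ∑ j, d j * y j ^ 2 ≤ ∑ j, d j * z j := by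
  have split : ∀ f : Fin n → ℝ, ∑ j, f j = ∑ h, ∑ j ∈ Nh h, f j := by
    intro f
    classical
    rw [← Finset.sum_biUnion]
    · refine Finset.sum_congr ?_ fun _ _ => rfl
      ext j
      simpa using (hN j).exists
    · intro h _ h' _ hne
      refine Finset.disjoint_left.2 fun j h1 h2 => hne ((hN j).unique h1 h2)
  rw [split, split]
  refine Finset.sum_le_sum fun h _ => ?_
  rw [← Finset.add_sum_erase _ _ (hj h), hy h, mul_add, Finset.mul_sum]
  have h1 : ∑ j ∈ (Nh h).erase (jh h), d j * y j ^ 2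
      = ∑ j ∈ (Nh h).erase (jh h), d j * x j ^ 2 :=
    Finset.sum_congr rfl fun j hm => by
      rw [hy' h j (Finset.mem_of_mem_erase hm) (Finset.ne_of_mem_erase hm)]
  have h2 := Finset.add_sum_erase (Nh h) (fun j => d j * x j ^ 2) (hj h)
  have h3 : ∑ k ∈ Nh h, d (jh h) * (z k - x k ^ 2) ≤ ∑ k ∈ Nh h, d k * (z k - x k ^ 2) :=
    Finset.sum_le_sum fun k hk =>
      mul_le_mul_of_nonneg_right (hd h k hk) (sub_nonneg.2 (hxz k))
  simp only [mul_sub, Finset.sum_sub_distrib] at h3 ⊢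
  linarith

/-- Replacing `s` by the point of square `r` whose sign is opposite to `c` decreases every
linear form `t ↦ α * t` whose coefficient has the weak sign of `c`. -/
theorem mul_neg_sign_sqrt_le {c α s r : ℝ} (hc : c ≠ 0) (hα : 0 ≤ c * α) (hs : s ^ 2 ≤ r) :
    α * (-SignType.sign c * √r) ≤ α * s := by
  have hs' : |s| ≤ √r := Real.abs_le_sqrt hs
  obtain ⟨hl, hu⟩ := abs_le.1 hs'
  rcases lt_or_gt_of_ne hc with h | h
  · have : α ≤ 0 := by
      by_contra! h'
      nlinarith
    simp only [sign_neg h, SignType.coe_neg_one, neg_neg, one_mul]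
    exact mul_le_mul_of_nonpos_left hu this
  · have : 0 ≤ α := nonneg_of_mul_nonneg_right hα h
    simp only [sign_pos h, SignType.coe_one, neg_mul, one_mul]
    exact mul_le_mul_of_nonneg_left hl this

/-- Every feasible point of (C) is dominated by a feasible point of (P). -/
theorem exists_qFeas_le {n m : ℕ} {H : Type*} [Fintype H]
    {D : Matrix (Fin n) (Fin n) ℝ} (hD : D.IsDiag)
    {A : Fin m → Matrix (Fin n) (Fin n) ℝ} (hA : ∀ i, (A i).IsDiag)
    {c : Fin n → ℝ} {a : Fin m → Fin n → ℝ} {b : Fin m → ℝ}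
    {Nh : H → Finset (Fin n)} {ξ : Fin m → H → ℝ} {jh : H → Fin n}
    (hpart : PartitionHyp D A Nh ξ jh)
    (hsign : ∀ h : H, c (jh h) ≠ 0 ∧ ∀ i, 0 ≤ c (jh h) * a i (jh h))
    {x z : Fin n → ℝ} (hxz : convFeas A a b x z) :
    ∃ y, qFeas A a b y ∧ qObj D c y ≤ convObj D c x z := by
  classical
  obtain ⟨hN, hξ, hj, hDmin⟩ := hpart
  obtain ⟨hcon, hle⟩ := hxz
  choose κ hκ hκu using fun j => (hN j)
  -- `r h` is the squared value needed at `jh h` to absorb the slack of the whole block.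
  set r : H → ℝ := fun h => x (jh h) ^ 2 + ∑ k ∈ Nh h, (z k - x k ^ 2) with hr
  have hxr : ∀ h, x (jh h) ^ 2 ≤ r h := fun h =>
    le_add_of_nonneg_right (Finset.sum_nonneg fun k _ => sub_nonneg.2 (hle k))
  have hκj : ∀ h, κ (jh h) = h := fun h => (hκu _ h (hj h)).symm
  let y : Fin n → ℝ := fun j =>
    if j = jh (κ j) then -SignType.sign (c j) * √(r (κ j)) else x j
  have yj : ∀ h, y (jh h) = -SignType.sign (c (jh h)) * √(r h) := fun h => by
    simp only [y, hκj, if_true]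
  have yne : ∀ h, ∀ j ∈ Nh h, j ≠ jh h → y j = x j := fun h j hjh hne => by
    have : κ j = h := (hκu j h hjh).symm
    simp only [y, this, if_neg hne]
  have ysq : ∀ h, y (jh h) ^ 2 = r h := fun h => by
    rw [yj, mul_pow, Real.sq_sqrt ((sq_nonneg _).trans (hxr h))]
    rcases lt_or_gt_of_ne (hsign h).1 with h' | h' <;> simp [h']
  have lin : ∀ α : Fin n → ℝ, (∀ h, 0 ≤ c (jh h) * α (jh h)) →
      ∑ j, α j * y j ≤ ∑ j, α j * x j := by
    intro α hα
    refine Finset.sum_le_sum fun j _ => ?_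
    by_cases hjj : j = jh (κ j)
    · rw [hjj, yj]
      exact mul_neg_sign_sqrt_le (hsign _).1 (hα _) (hxr _)
    · rw [yne _ j (hκ j) hjj]
  have quad : ∀ d : Fin n → ℝ, (∀ h, ∀ j ∈ Nh h, d (jh h) ≤ d j) →
      ∑ j, d j * y j ^ 2 ≤ ∑ j, d j * z j := fun d hd =>
    sum_concentrate_le hN hj hle ysq yne hd
  refine ⟨y, fun i => ?_, ?_⟩
  · rw [diag_quad (hA i)]
    have h1 := quad (fun j => A i j j) fun h j hm => by rw [hξ i h j hm, hξ i h _ (hj h)]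
    have h2 := lin (a i) fun h => (hsign h).2 i
    have h3 := hcon i
    linarith
  · rw [qObj, convObj, diag_quad hD]
    have h1 := quad (fun j => D j j) fun h j hm => by
      by_cases hjj : j = jh h
      · rw [hjj]
      · exact (hDmin h j hm hjj).le
    have h2 := lin c fun h => mul_self_nonneg _
    linarith

/-- under Assumption 1 and the partition hypothesis, if for each
`h ∈ H` the variable `x_{j_h}` is sign-definite (`c_{j_h} ≠ 0` and
`c_{j_h} · a_{i j_h} ≥ 0` for all `i`), then (C) and (S) are exact: `p* = v* = c*`. -/
theorem statement10 {n m : ℕ} {H : Type*} [Fintype H] (hn : 0 < n) (hm : 0 < m)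
    (D : Matrix (Fin n) (Fin n) ℝ) (hD : D.IsDiag)
    (A : Fin m → Matrix (Fin n) (Fin n) ℝ) (hA : ∀ i, (A i).IsDiag)
    (c : Fin n → ℝ) (a : Fin m → Fin n → ℝ) (b : Fin m → ℝ)
    (Nh : H → Finset (Fin n)) (ξ : Fin m → H → ℝ) (jh : H → Fin n)
    (hpart : PartitionHyp D A Nh ξ jh)
    (hass : Assumption1 A a b)
    (hsign : ∀ h : H, c (jh h) ≠ 0 ∧ ∀ i, 0 ≤ c (jh h) * a i (jh h)) :
    convVal D A c a b = shorVal D A c a b ∧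
      shorVal D A c a b = qVal D A c a b := by
  have h1 := convVal_le_shorVal hD hA c a b
  have h2 := shorVal_le_qVal D A c a b
  have h3 : qVal D A c a b ≤ convVal D A c a b := by
    refine le_sInf ?_
    rintro v ⟨x, z, hxz, rfl⟩
    obtain ⟨y, hy, hle⟩ := exists_qFeas_le hD hA hpart hsign hxz
    exact le_trans (b := ((qObj D c y : ℝ) : EReal)) (sInf_le ⟨y, hy, rfl⟩)
      (EReal.coe_le_coe_iff.2 hle)
  exact ⟨le_antisymm h1 (h2.trans h3), le_antisymm h2 (h3.trans h1)⟩

end DiagQCQP2011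
end
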